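/- arXiv:2305.07720 — 2 statements merged into one kernel-verified Lean document; each statement's English description precedes it below -/
import Mathlib

section
/- Let n and k be positive integers. Let V be a unitary complex matrix indexed by (Fin n × Fin k), U a unitary complex matrix indexed by Fin n, and Π a nonzero complex matrix indexed by Fin k with Πᴴ = Π and Π * Π = Π. Assume V * (1 ⊗ Π) = U ⊗ Π, and let r be the rank of Π. Then there exist a unitary complex matrix W indexed by (Fin n × Fin k), a unitary complex matrix V' indexed by Fin (n*(k−r)), and a bijection e : (Fin n × Fin k) ≃ ((Fin r × Fin n) ⊕ Fin (n*(k−r))) such that reindexing W * V * Wᴴ along e yields the block-diagonal matrix Matrix.fromBlocks (1 ⊗ U) 0 0 V', where 1 ⊗ U is the Kronecker product of the r×r identity with U. In other words, V is unitarily conjugate to the direct sum of rank(Π) copies of U together with some unitary matrix. -/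
open Matrix

/-!
If the columns of `J = P X` form an orthonormal basis of the range of `P`, then
`V (1 ⊗ J) = U ⊗ J = (1 ⊗ J) (U ⊗ 1)`, so the isometry `1 ⊗ J` intertwines `V` with `rank P` copies
of `U`. Completing it to a unitary makes `V` block upper triangular, and a block upper triangular
unitary matrix is block diagonal.
-/

section BlockUnitary

variable {m p q R : Type*} [Fintype m] [Fintype p] [Fintype q]
  [DecidableEq m] [DecidableEq p] [DecidableEq q] [CommRing R] [StarRing R]

lemma reindex_mem_unitaryGroup (e : m ≃ p) {M : Matrix m m R} (hM : M ∈ unitaryGroup m R) :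
    reindex e e M ∈ unitaryGroup p R := by
  rw [mem_unitaryGroup_iff, star_eq_conjTranspose] at hM ⊢
  rw [conjTranspose_reindex, reindex_apply, reindex_apply, submatrix_mul_equiv, hM,
    submatrix_one_equiv]

lemma eq_zero_and_mem_unitaryGroup_of_fromBlocks_zero₂₁ [PartialOrder R] [StarOrderedRing R]
    [NoZeroDivisors R] {A : Matrix p p R} {B : Matrix p q R} {D : Matrix q q R}
    (h : fromBlocks A B 0 D ∈ unitaryGroup (p ⊕ q) R) : B = 0 ∧ D ∈ unitaryGroup q R := by
  have h_left := mem_unitaryGroup_iff'.1 h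
  have h_right := mem_unitaryGroup_iff.1 h
  simp only [star_eq_conjTranspose, fromBlocks_conjTranspose, fromBlocks_multiply,
    ← fromBlocks_one, fromBlocks_inj, conjTranspose_zero, Matrix.mul_zero, Matrix.zero_mul,
    zero_add, add_zero] at h_left h_right
  have hA : A * Aᴴ = 1 := mul_eq_one_comm.1 h_left.1
  have hB : B * Bᴴ = 0 := by simpa only [hA, add_eq_left] using h_right.1
  exact ⟨self_mul_conjTranspose_eq_zero.1 hB, mem_unitaryGroup_iff.2 h_right.2.2.2⟩

end BlockUnitary

section Isometry

variable {m n p q 𝕜 : Type*} [Fintype m] [RCLike 𝕜]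

lemma conjTranspose_mul_self_eq_one_iff_orthonormal [DecidableEq p] {S : Matrix m p 𝕜} :
    Sᴴ * S = 1 ↔ Orthonormal 𝕜 fun j => WithLp.toLp 2 (S.col j) := by
  rw [← gram_eq_one_iff_orthonormal, gram_eq_conjTranspose_mul (EuclideanSpace.basisFun m 𝕜)]
  rfl

lemma exists_fromCols_conjTranspose_mul_self_eq_one [Fintype p] [Fintype q] [DecidableEq p]
    [DecidableEq q] {S : Matrix m p 𝕜} (hS : Sᴴ * S = 1)
    (hcard : Fintype.card m = Fintype.card p + Fintype.card q) :
    ∃ T : Matrix m q 𝕜, (fromCols S T)ᴴ * fromCols S T = 1 := by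
  let v : p ⊕ q → EuclideanSpace 𝕜 m := Sum.elim (fun j => WithLp.toLp 2 (S.col j)) 0
  have hv : Orthonormal 𝕜 ((Set.range Sum.inl).domRestrict v) := by
    convert (conjTranspose_mul_self_eq_one_iff_orthonormal.1 hS).comp _
      (Equiv.ofInjective _ Sum.inl_injective).symm.injective using 1
    funext ⟨_, j, rfl⟩
    simp [v]
  obtain ⟨b, hb⟩ := hv.exists_orthonormalBasis_extension_of_card_eq
    (by rw [finrank_euclideanSpace, Fintype.card_sum, hcard])
  let T : Matrix m q 𝕜 := of fun i j => b (.inr j) i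
  have hcols : (fun j => WithLp.toLp 2 ((fromCols S T).col j)) = b := by
    funext j
    cases j with
    | inl j => exact (hb (.inl j) ⟨j, rfl⟩).symm
    | inr j => rfl
  refine ⟨T, conjTranspose_mul_self_eq_one_iff_orthonormal.2 ?_⟩
  rw [hcols]
  exact b.orthonormal

lemma exists_conjTranspose_mul_self_mul_eq_one [Fintype n] (P : Matrix m n 𝕜) :
    ∃ X : Matrix n (Fin P.rank) 𝕜, (P * X)ᴴ * (P * X) = 1 := by
  classical
  have hrank : Module.finrank 𝕜 (LinearMap.range (toLpLin 2 2 P)) = P.rank := by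
    rw [toLpLin_eq_toLin, ← rank_eq_finrank_range_toLin]
  let b := (stdOrthonormalBasis 𝕜 (LinearMap.range (toLpLin 2 2 P))).reindex (finCongr hrank)
  choose x hx using fun j => (b j).2
  refine ⟨of fun i j => x j i, conjTranspose_mul_self_eq_one_iff_orthonormal.2 ?_⟩
  convert b.orthonormal.comp_linearIsometry (Submodule.subtypeₗᵢ _) using 2 with j
  exact hx j

open scoped ComplexOrder in
theorem exists_unitary_reindex_eq_fromBlocks_of_mul_eq [Fintype p] [Fintype q] [DecidableEq m]
    [DecidableEq p] [DecidableEq q] {V : Matrix m m 𝕜} (hV : V ∈ unitaryGroup m 𝕜)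
    {S : Matrix m p 𝕜} (hS : Sᴴ * S = 1) {A : Matrix p p 𝕜}
    (hVS : V * S = S * A) (e : m ≃ p ⊕ q) :
    ∃ W ∈ unitaryGroup m 𝕜, ∃ D ∈ unitaryGroup q 𝕜,
      reindex e e (W * V * Wᴴ) = fromBlocks A 0 0 D := by
  obtain ⟨T, hQ⟩ := exists_fromCols_conjTranspose_mul_self_eq_one (q := q) hS
    (by rw [Fintype.card_congr e, Fintype.card_sum])
  let W : Matrix m m 𝕜 := (fromCols S T)ᴴ.submatrix e id
  have hWstar : Wᴴ = (fromCols S T).submatrix id e := by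
    rw [conjTranspose_submatrix, conjTranspose_conjTranspose]
  have hW : W ∈ unitaryGroup m 𝕜 := by
    rw [mem_unitaryGroup_iff, star_eq_conjTranspose, hWstar, ← submatrix_mul _ _ _ _ _
      Function.bijective_id, hQ, submatrix_one_equiv]
  have hTS : Tᴴ * S = 0 := by
    rw [conjTranspose_fromCols_eq_fromRows_conjTranspose, fromRows_mul_fromCols,
      ← fromBlocks_one, fromBlocks_inj] at hQ
    exact hQ.2.2.1
  have htriangular :
      reindex e e (W * V * Wᴴ) = fromBlocks A (Sᴴ * V * T) 0 (Tᴴ * V * T) := by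
    calc reindex e e (W * V * Wᴴ)
        = (fromCols S T)ᴴ * V * fromCols S T := by
          rw [hWstar]; ext; simp [W, mul_apply]
      _ = fromBlocks A (Sᴴ * V * T) 0 (Tᴴ * V * T) := by
          rw [conjTranspose_fromCols_eq_fromRows_conjTranspose, fromRows_mul,
            fromRows_mul_fromCols, Matrix.mul_assoc Sᴴ V S, Matrix.mul_assoc Tᴴ V S, hVS,
            ← Matrix.mul_assoc, ← Matrix.mul_assoc, hS, hTS, Matrix.one_mul, Matrix.zero_mul]
  have hunitary := reindex_mem_unitaryGroup e (mul_mem (mul_mem hW hV) (Unitary.star_mem hW))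
  rw [star_eq_conjTranspose, htriangular] at hunitary
  obtain ⟨hB, hD⟩ := eq_zero_and_mem_unitaryGroup_of_fromBlocks_zero₂₁ hunitary
  exact ⟨W, hW, _, hD, by rw [htriangular, hB]⟩

end Isometry

section Catalytic

open scoped Kronecker

lemma kronecker_submatrix_swap {l m n p R : Type*} [CommMagma R] (A : Matrix l m R)
    (B : Matrix n p R) : (A ⊗ₖ B).submatrix Prod.swap Prod.swap = B ⊗ₖ A := by
  ext
  exact mul_comm _ _

lemma nonempty_equiv_prod_sum_fin (n : ℕ) {k r : ℕ} (h : r ≤ k) :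
    Nonempty (Fin n × Fin k ≃ (Fin r × Fin n) ⊕ Fin (n * (k - r))) := by
  refine Fintype.card_eq.1 ?_
  simp only [Fintype.card_sum, Fintype.card_prod, Fintype.card_fin]
  rw [mul_comm r n, ← mul_add, Nat.add_sub_cancel' h]

theorem catalytic_embedding_directsum_form_general {ι κ μ τ 𝕜 : Type*} [Fintype ι] [Fintype κ]
    [Fintype μ] [Fintype τ] [DecidableEq ι] [DecidableEq κ] [DecidableEq τ] [RCLike 𝕜]
    {V : Matrix (ι × κ) (ι × κ) 𝕜} (hV : V ∈ unitaryGroup (ι × κ) 𝕜) {U : Matrix ι ι 𝕜}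
    {P : Matrix κ μ 𝕜}
    (hcat : V * ((1 : Matrix ι ι 𝕜) ⊗ₖ P) = U ⊗ₖ P) (e : ι × κ ≃ (Fin P.rank × ι) ⊕ τ) :
    ∃ W ∈ unitaryGroup (ι × κ) 𝕜, ∃ V' ∈ unitaryGroup τ 𝕜,
      reindex e e (W * V * Wᴴ) =
        fromBlocks ((1 : Matrix (Fin P.rank) (Fin P.rank) 𝕜) ⊗ₖ U) 0 0 V' := by
  obtain ⟨X, hX⟩ := exists_conjTranspose_mul_self_mul_eq_one P
  let J := P * X
  let S : Matrix (ι × κ) (Fin P.rank × ι) 𝕜 := ((1 : Matrix ι ι 𝕜) ⊗ₖ J).submatrix id Prod.swap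
  have hS : Sᴴ * S = 1 := by
    rw [conjTranspose_submatrix, ← submatrix_mul _ _ _ _ _ Function.bijective_id,
      conjTranspose_kronecker, ← mul_kronecker_mul, hX, conjTranspose_one, Matrix.one_mul,
      one_kronecker_one]
    exact submatrix_one_equiv (Equiv.prodComm _ _)
  have hVJ : V * ((1 : Matrix ι ι 𝕜) ⊗ₖ J) =
      ((1 : Matrix ι ι 𝕜) ⊗ₖ J) * (U ⊗ₖ (1 : Matrix (Fin P.rank) (Fin P.rank) 𝕜)) :=
    calc V * ((1 : Matrix ι ι 𝕜) ⊗ₖ J)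
        = V * ((1 : Matrix ι ι 𝕜) ⊗ₖ P) * ((1 : Matrix ι ι 𝕜) ⊗ₖ X) := by
          rw [Matrix.mul_assoc, ← mul_kronecker_mul, Matrix.one_mul]
      _ = U ⊗ₖ J := by rw [hcat, ← mul_kronecker_mul, Matrix.mul_one]
      _ = ((1 : Matrix ι ι 𝕜) ⊗ₖ J) * (U ⊗ₖ (1 : Matrix (Fin P.rank) (Fin P.rank) 𝕜)) := by
          rw [← mul_kronecker_mul, Matrix.one_mul U, Matrix.mul_one J]
  have hVS : V * S = S * ((1 : Matrix (Fin P.rank) (Fin P.rank) 𝕜) ⊗ₖ U) := by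
    calc V * S
        = (V * ((1 : Matrix ι ι 𝕜) ⊗ₖ J)).submatrix id Prod.swap := rfl
      _ = S * (U ⊗ₖ (1 : Matrix (Fin P.rank) (Fin P.rank) 𝕜)).submatrix Prod.swap Prod.swap := by
          rw [hVJ, submatrix_mul _ _ _ _ _ Prod.swap_bijective]
      _ = S * ((1 : Matrix (Fin P.rank) (Fin P.rank) 𝕜) ⊗ₖ U) := by rw [kronecker_submatrix_swap]
  exact exists_unitary_reindex_eq_fromBlocks_of_mul_eq hV hS hVS e

end Catalytic

/-- Proposition `directsumform`. If `(V, Π)` is a catalytic embedding of the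
unitary `U`, then `V` is unitarily conjugate to the direct sum of `rank Π` copies of `U`
together with some unitary matrix. -/
theorem catalytic_embedding_directsum_form (n k : ℕ) (hn : 0 < n) (hk : 0 < k)
    (V : Matrix (Fin n × Fin k) (Fin n × Fin k) ℂ)
    (U : Matrix (Fin n) (Fin n) ℂ) (P : Matrix (Fin k) (Fin k) ℂ)
    (hV : V ∈ Matrix.unitaryGroup (Fin n × Fin k) ℂ)
    (hU : U ∈ Matrix.unitaryGroup (Fin n) ℂ)
    (hP_ne : P ≠ 0) (hP_herm : Pᴴ = P) (hP_idem : P * P = P)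
    (hcat : V * Matrix.kroneckerMap (· * ·) (1 : Matrix (Fin n) (Fin n) ℂ) P
          = Matrix.kroneckerMap (· * ·) U P) :
    ∃ (W : Matrix (Fin n × Fin k) (Fin n × Fin k) ℂ)
      (V' : Matrix (Fin (n * (k - P.rank))) (Fin (n * (k - P.rank))) ℂ)
      (e : (Fin n × Fin k) ≃ (Fin P.rank × Fin n) ⊕ Fin (n * (k - P.rank))),
      W ∈ Matrix.unitaryGroup (Fin n × Fin k) ℂ ∧
      V' ∈ Matrix.unitaryGroup (Fin (n * (k - P.rank))) ℂ ∧
      Matrix.reindex e e (W * V * Wᴴ) =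
        Matrix.fromBlocks
          (Matrix.kroneckerMap (· * ·) (1 : Matrix (Fin P.rank) (Fin P.rank) ℂ) U) 0 0 V' := by
  obtain ⟨e⟩ := nonempty_equiv_prod_sum_fin n P.rank_le_height
  obtain ⟨W, hW, V', hV', h⟩ := catalytic_embedding_directsum_form_general hV hcat e
  exact ⟨W, V', e, hW, hV', h⟩
end

section
/- Let R be a subring of ℂ closed under complex conjugation and let F = {a/b : a, b ∈ R, b ≠ 0}, a subfield of ℂ. Let α ∈ ℂ be algebraic over F whose minimal polynomial p over F has all coefficients in R and degree d, and let R[α] denote the smallest subring of ℂ containing R and α; assume conj α ∈ R[α]. Assume that every field embedding σ : F(α) → ℂ fixing F pointwise satisfies σ(conj z) = conj(σ z) for all z ∈ F(α), where F(α) is the subfield of ℂ generated by F and α (the Kroneckerian condition). Let Λ be a complex matrix indexed by Fin k all of whose entries lie in R, such that Λ * Λᴴ = Λᴴ * Λ and the characteristic polynomial of Λ equals p^c (viewing p as a polynomial over ℂ) for some positive integer c. Then there exists a pre-embedding Φ of dimension k from R[α] to R such that Φ₀(α) = Λ and, for every square complex matrix A with entries in R[α] written (uniquely) as A = Σ_{j<d}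 α^j • A_j with all entries of each A_j in R, one has Φ(A) = Σ_{j<d} A_j ⊗ Λ^j. -/
open Matrix

/-- A *pre-embedding of dimension `k` from `S` to `R`* (for `S R : Subring ℂ`, each closed
under complex conjugation): a family `toFun` assigning to every square complex matrix indexed
by a finite type `ι` (with all entries in `S`) a complex matrix indexed by `ι × Fin k` with all
entries in `R`, together with a fixed nonzero orthogonal projector `proj` on `Fin k` (the
catalytic projector), satisfying multiplicativity, additivity, unitality, compatibility with
conjugate transpose, compatibility with Kronecker products by matrices over `R ∩ S`, and the
catalytic condition `Φ(A) * (1 ⊗ Π) = A ⊗ Π`. -/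
structure PreEmbedding (k : ℕ) (S R : Subring ℂ) : Type 1 where
  toFun : ∀ (ι : Type) [Fintype ι] [DecidableEq ι],
    Matrix ι ι ℂ → Matrix (ι × Fin k) (ι × Fin k) ℂ
  proj : Matrix (Fin k) (Fin k) ℂ
  hS_conj : ∀ z ∈ S, (starRingEnd ℂ) z ∈ S
  hR_conj : ∀ z ∈ R, (starRingEnd ℂ) z ∈ R
  proj_ne_zero : proj ≠ 0
  proj_herm : proj.conjTranspose = proj
  proj_idem : proj * proj = proj
  mem_R : ∀ (ι : Type) [Fintype ι] [DecidableEq ι] (A : Matrix ι ι ℂ),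
    (∀ i j, A i j ∈ S) → ∀ p q, toFun ι A p q ∈ R
  map_mul : ∀ (ι : Type) [Fintype ι] [DecidableEq ι] (A B : Matrix ι ι ℂ),
    (∀ i j, A i j ∈ S) → (∀ i j, B i j ∈ S) → toFun ι (A * B) = toFun ι A * toFun ι B
  map_add : ∀ (ι : Type) [Fintype ι] [DecidableEq ι] (A B : Matrix ι ι ℂ),
    (∀ i j, A i j ∈ S) → (∀ i j, B i j ∈ S) → toFun ι (A + B) = toFun ι A + toFun ι B
  map_one : ∀ (ι : Type) [Fintype ι] [DecidableEq ι], toFun ι (1 : Matrix ι ι ℂ) = 1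
  map_conjTranspose : ∀ (ι : Type) [Fintype ι] [DecidableEq ι] (A : Matrix ι ι ℂ),
    (∀ i j, A i j ∈ S) → toFun ι Aᴴ = (toFun ι A)ᴴ
  map_kronecker : ∀ (ι κ : Type) [Fintype ι] [DecidableEq ι] [Fintype κ] [DecidableEq κ]
    (C : Matrix ι ι ℂ) (A : Matrix κ κ ℂ),
    (∀ i j, C i j ∈ R) → (∀ i j, C i j ∈ S) → (∀ i j, A i j ∈ S) →
    toFun (ι × κ) (Matrix.kroneckerMap (· * ·) C A) =
      Matrix.reindex (Equiv.prodAssoc ι κ (Fin k)).symm (Equiv.prodAssoc ι κ (Fin k)).symm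
        (Matrix.kroneckerMap (· * ·) C (toFun κ A))
  catalytic : ∀ (ι : Type) [Fintype ι] [DecidableEq ι] (A : Matrix ι ι ℂ),
    (∀ i j, A i j ∈ S) →
    toFun ι A * Matrix.kroneckerMap (· * ·) (1 : Matrix ι ι ℂ) proj =
      Matrix.kroneckerMap (· * ·) A proj

/-- `Φ₀ s`: the pre-embedding applied to the `1 × 1` matrix with entry `s`, reindexed to a
matrix indexed by `Fin k`. -/
def PreEmbedding.apply0 {k : ℕ} {S R : Subring ℂ} (E : PreEmbedding k S R) (s : ℂ) :
    Matrix (Fin k) (Fin k) ℂ :=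
  Matrix.reindex (Equiv.punitProd (Fin k)) (Equiv.punitProd (Fin k))
    (E.toFun Unit (Matrix.of fun _ _ => s))

/-!
Sending `α` to `Λ` extends to a representation `φ` of `F(α)` over `F`, because a normal matrix is
annihilated by every polynomial vanishing on its spectrum. Each eigenvalue `l` of `Λ` is a root of
`p`, hence gives an embedding `α ↦ l` of `F(α)` into `ℂ`, and the functional calculus makes `φ` a
direct sum of these embeddings. If conjugation commutes with all of them, then `φ` turns
conjugation into the conjugate transpose. As `α` itself is an eigenvalue, the orthogonal projection
onto its eigenspace intertwines `φ` with the inclusion `F(α) ⊆ ℂ`, and serves as the catalytic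
projector. Applying `φ` to every entry of a matrix gives `Φ`.
-/

open Polynomial IntermediateField
open scoped Kronecker ComplexConjugate

section EigenProjection

variable {A : Type*} [TopologicalSpace A] [Ring A] [StarRing A] [Algebra ℂ A]
  [ContinuousFunctionalCalculus ℂ A IsStarNormal] {a : A}

theorem aeval_eq_star_aeval (ha : IsStarNormal a) {f g : ℂ[X]}
    (hfg : ∀ z ∈ spectrum ℂ a, f.eval z = star (g.eval z)) : aeval a f = star (aeval a g) := by
  rw [← cfc_polynomial (R := ℂ) f a, ← cfc_polynomial (R := ℂ) g a, ← cfc_star]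
  exact cfc_congr hfg

theorem aeval_eq_zero_of_forall_mem_spectrum (ha : IsStarNormal a) {f : ℂ[X]}
    (hf : ∀ z ∈ spectrum ℂ a, f.eval z = 0) : aeval a f = 0 := by
  simpa using aeval_eq_star_aeval ha (g := 0) (by simpa using hf)

/-- The spectral projection of a normal element `a` at an isolated point `z` of its spectrum; for
a normal matrix, the orthogonal projection onto the eigenspace of `z`. -/
noncomputable def eigenProjection (a : A) (z : ℂ) : A :=
  cfc (Set.indicator {z} (1 : ℂ → ℂ)) a

theorem isStarProjection_eigenProjection (h : (spectrum ℂ a).Finite) (z : ℂ) :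
    IsStarProjection (eigenProjection a z) where
  isIdempotentElem := by
    have hc := h.continuousOn (Set.indicator {z} (1 : ℂ → ℂ))
    rw [IsIdempotentElem, eigenProjection, ← cfc_mul _ _ a hc hc]
    exact cfc_congr fun w _ => by by_cases hw : w = z <;> simp [hw]
  isSelfAdjoint := by
    rw [IsSelfAdjoint, eigenProjection, ← cfc_star]
    exact cfc_congr fun w _ => by by_cases hw : w = z <;> simp [hw]

theorem eigenProjection_ne_zero (ha : IsStarNormal a) (h : (spectrum ℂ a).Finite) {z : ℂ}
    (hz : z ∈ spectrum ℂ a) : eigenProjection a z ≠ 0 := by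
  intro h0
  rw [eigenProjection, ← cfc_zero (R := ℂ) a] at h0
  simpa using eqOn_of_cfc_eq_cfc h0 (h.continuousOn _) continuousOn_const ha hz

theorem aeval_mul_eigenProjection (ha : IsStarNormal a) (h : (spectrum ℂ a).Finite) (z : ℂ)
    (f : ℂ[X]) : aeval a f * eigenProjection a z = f.eval z • eigenProjection a z := by
  have hc := h.continuousOn (Set.indicator {z} (1 : ℂ → ℂ))
  rw [eigenProjection, ← cfc_polynomial (R := ℂ) f a, ← cfc_mul _ _ a (h.continuousOn _) hc,
    ← cfc_const_mul _ _ a hc]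
  exact cfc_congr fun w _ => by by_cases hw : w = z <;> simp [hw]

end EigenProjection

theorem eval_eq_zero_of_mem_spectrum {𝕜 A : Type*} [Field 𝕜] [Ring A] [Algebra 𝕜 A] {a : A}
    {f : 𝕜[X]} (hf : aeval a f = 0) {l : 𝕜} (hl : l ∈ spectrum 𝕜 a) : f.eval l = 0 := by
  have hmem : f.eval l ∈ spectrum 𝕜 (0 : A) :=
    hf ▸ spectrum.subset_polynomial_aeval a f ⟨l, hl, rfl⟩
  by_contra h
  rw [spectrum.mem_iff, sub_zero] at hmem
  exact hmem ((IsUnit.mk0 _ h).map (algebraMap 𝕜 A))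

section PowerBasis

variable {K L A : Type*} [Field K] [Algebra K ℂ] [Field L] [Algebra K L]
  [Ring A] [Algebra ℂ A] [Algebra K A] [IsScalarTower K ℂ A]

theorem exists_algHom_gen_eq_of_mem_spectrum (pb : PowerBasis K L) (φ : L →ₐ[K] A) {l : ℂ}
    (hl : l ∈ spectrum ℂ (φ pb.gen)) : ∃ τ : L →ₐ[K] ℂ, τ pb.gen = l := by
  have : aeval l (minpoly K pb.gen) = 0 := by
    rw [← eval_map_algebraMap]
    refine eval_eq_zero_of_mem_spectrum ?_ hl
    rw [aeval_map_algebraMap, aeval_algHom_apply, minpoly.aeval, map_zero]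
  exact ⟨pb.lift l this, pb.lift_gen l this⟩

variable [TopologicalSpace A] [StarRing A] [ContinuousFunctionalCalculus ℂ A IsStarNormal]

theorem algHom_eq_star (pb : PowerBasis K L) (φ : L →ₐ[K] A)
    (hφ : IsStarNormal (φ pb.gen)) {z w : L} (h : ∀ τ : L →ₐ[K] ℂ, τ w = conj (τ z)) :
    φ w = star (φ z) := by
  obtain ⟨f, rfl⟩ := pb.exists_eq_aeval' z
  obtain ⟨g, rfl⟩ := pb.exists_eq_aeval' w
  simp only [← aeval_algHom_apply] at h ⊢
  rw [← aeval_map_algebraMap ℂ (φ pb.gen) f, ← aeval_map_algebraMap ℂ (φ pb.gen) g]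
  refine aeval_eq_star_aeval hφ fun l hl => ?_
  obtain ⟨τ, rfl⟩ := exists_algHom_gen_eq_of_mem_spectrum pb φ hl
  simpa only [eval_map_algebraMap, starRingEnd_apply] using h τ

theorem algHom_mul_eigenProjection (pb : PowerBasis K L) (φ : L →ₐ[K] A)
    (hφ : IsStarNormal (φ pb.gen)) (hfin : (spectrum ℂ (φ pb.gen)).Finite) (τ : L →ₐ[K] ℂ)
    (z : L) : φ z * eigenProjection (φ pb.gen) (τ pb.gen) =
      τ z • eigenProjection (φ pb.gen) (τ pb.gen) := by
  obtain ⟨f, rfl⟩ := pb.exists_eq_aeval' z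
  have hf := aeval_mul_eigenProjection hφ hfin (τ pb.gen) (f.map (algebraMap K ℂ))
  rwa [aeval_map_algebraMap, eval_map_algebraMap, aeval_algHom_apply, aeval_algHom_apply] at hf

end PowerBasis

section BlockHom

variable {ι κ S C : Type*} [Fintype ι] [DecidableEq ι] [Fintype κ] [DecidableEq κ]

/-- The ring homomorphism from `ι × ι` matrices over `S` to `(ι × κ) × (ι × κ)` matrices over `C`
which replaces each entry `s` by the block `φ s`. -/
def blockHom (ι : Type*) [Fintype ι] [DecidableEq ι] [Semiring S] [Semiring C]
    (φ : S →+* Matrix κ κ C) : Matrix ι ι S →+* Matrix (ι × κ) (ι × κ) C :=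
  (compRingEquiv ι κ C).toRingHom.comp φ.mapMatrix

theorem blockHom_apply [Semiring S] [Semiring C] (φ : S →+* Matrix κ κ C) (A : Matrix ι ι S)
    (x y : ι × κ) : blockHom ι φ A x y = φ (A x.1 y.1) x.2 y.2 := rfl

theorem blockHom_mul_one_kronecker [Semiring S] [CommSemiring C] {φ : S →+* Matrix κ κ C}
    {χ : S → C} {P : Matrix κ κ C} (h : ∀ s, φ s * P = χ s • P) (A : Matrix ι ι S) :
    blockHom ι φ A * (1 : Matrix ι ι C) ⊗ₖ P = A.map χ ⊗ₖ P := by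
  ext ⟨i, a⟩ ⟨j, b⟩
  have hij := congrFun₂ (h (A i j)) a b
  simp only [Matrix.mul_apply, blockHom_apply, kronecker_apply, Fintype.sum_prod_type,
    one_apply, ite_mul, one_mul, zero_mul, mul_ite, mul_zero] at hij ⊢
  rw [Finset.sum_comm]
  simpa using hij

theorem blockHom_smul_map [CommSemiring S] [CommSemiring C] {φ : S →+* Matrix κ κ C} (s : S)
    {B : Matrix ι ι S} {M : Matrix ι ι C} (hB : ∀ i j, φ (B i j) = M i j • 1) :
    blockHom ι φ (s • B) = M ⊗ₖ φ s := by
  ext ⟨i, a⟩ ⟨j, b⟩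
  simp [blockHom_apply, hB]

end BlockHom

section Representation

variable {k : ℕ} {S R : Subring ℂ}

/-- `IsCatalyticRep R φ P`: the ring homomorphism `φ` represents the scalars in `S` by matrices
over `R` and `P` is a catalytic projector for it, so that `φ` is the part `Φ₀` of a pre-embedding
from `S` to `R`. -/
structure IsCatalyticRep (R : Subring ℂ) (φ : S →+* Matrix (Fin k) (Fin k) ℂ)
    (P : Matrix (Fin k) (Fin k) ℂ) : Prop where
  map_mem : ∀ s, φ s ∈ R.matrix
  map_of_mem : ∀ s : S, (s : ℂ) ∈ R → φ s = (s : ℂ) • 1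
  map_conj : ∀ s t : S, (t : ℂ) = conj (s : ℂ) → φ t = (φ s)ᴴ
  isStarProjection : IsStarProjection P
  ne_zero : P ≠ 0
  map_mul_proj : ∀ s : S, φ s * P = (s : ℂ) • P

theorem exists_map_subtype_eq {ι : Type*} {A : Matrix ι ι ℂ} (hA : ∀ i j, A i j ∈ S) :
    ∃ B : Matrix ι ι S, B.map S.subtype = A :=
  ⟨of fun i j => ⟨A i j, hA i j⟩, rfl⟩

/-- The action of `blockHom` on complex matrices with entries in the subring `S`, with value `0`
at all other matrices. -/
noncomputable def blockFun (φ : S →+* Matrix (Fin k) (Fin k) ℂ) (ι : Type) [Fintype ι]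
    [DecidableEq ι] : Matrix ι ι ℂ → Matrix (ι × Fin k) (ι × Fin k) ℂ :=
  Function.extend (fun B : Matrix ι ι S => B.map S.subtype) (blockHom ι φ) 0

theorem blockFun_map (φ : S →+* Matrix (Fin k) (Fin k) ℂ) {ι : Type} [Fintype ι]
    [DecidableEq ι] (B : Matrix ι ι S) : blockFun φ ι (B.map S.subtype) = blockHom ι φ B :=
  (Matrix.map_injective Subtype.val_injective).extend_apply _ _ _

theorem blockFun_sum_smul {φ : S →+* Matrix (Fin k) (Fin k) ℂ}
    (hφ : ∀ s : S, (s : ℂ) ∈ R → φ s = (s : ℂ) • 1) (hRS : R ≤ S)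
    {ι : Type} [Fintype ι] [DecidableEq ι]
    {J : Type*} (t : Finset J) (s : J → S) (M : J → Matrix ι ι ℂ) (hM : ∀ j i i', M j i i' ∈ R) :
    blockFun φ ι (∑ j ∈ t, (s j : ℂ) • M j) = ∑ j ∈ t, M j ⊗ₖ φ (s j) := by
  choose B hB using fun j => exists_map_subtype_eq fun i i' => hRS (hM j i i')
  obtain rfl : (fun j => (B j).map S.subtype) = M := funext hB
  have hsum : ∑ j ∈ t, (s j : ℂ) • (B j).map S.subtype = (∑ j ∈ t, s j • B j).map S.subtype := by
    ext i i'
    simp [Matrix.sum_apply]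
  rw [hsum, blockFun_map, map_sum]
  exact Finset.sum_congr rfl fun j _ =>
    blockHom_smul_map (s j) fun i i' => hφ _ (hM j i i')

/-- The pre-embedding which applies a catalytic representation of `S` to every matrix entry. -/
noncomputable def IsCatalyticRep.toPreEmbedding {φ : S →+* Matrix (Fin k) (Fin k) ℂ}
    {P : Matrix (Fin k) (Fin k) ℂ} (h : IsCatalyticRep R φ P) (hS : ∀ z ∈ S, conj z ∈ S)
    (hR : ∀ z ∈ R, conj z ∈ R) : PreEmbedding k S R where
  toFun := blockFun φ
  proj := P
  hS_conj := hS
  hR_conj := hR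
  proj_ne_zero := h.ne_zero
  proj_herm := h.isStarProjection.isSelfAdjoint
  proj_idem := h.isStarProjection.isIdempotentElem
  mem_R ι _ _ A hA x y := by
    obtain ⟨B, rfl⟩ := exists_map_subtype_eq hA
    rw [blockFun_map]
    exact h.map_mem _ _ _
  map_mul ι _ _ A B hA hB := by
    obtain ⟨A, rfl⟩ := exists_map_subtype_eq hA
    obtain ⟨B, rfl⟩ := exists_map_subtype_eq hB
    simp only [← Matrix.map_mul, blockFun_map, _root_.map_mul]
  map_add ι _ _ A B hA hB := by
    obtain ⟨A, rfl⟩ := exists_map_subtype_eq hA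
    obtain ⟨B, rfl⟩ := exists_map_subtype_eq hB
    rw [← Matrix.map_add _ (_root_.map_add S.subtype)]
    simp only [blockFun_map, _root_.map_add]
  map_one ι _ _ := by
    rw [← Matrix.map_one S.subtype (map_zero _) (_root_.map_one _), blockFun_map, _root_.map_one]
  map_conjTranspose ι _ _ A hA := by
    obtain ⟨B, rfl⟩ := exists_map_subtype_eq hA
    obtain ⟨C, hC⟩ := exists_map_subtype_eq (A := (B.map S.subtype)ᴴ) fun i j => hS _ (hA j i)
    rw [← hC, blockFun_map, blockFun_map]
    ext ⟨i, a⟩ ⟨j, b⟩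
    exact congrFun₂ (h.map_conj (B j i) (C i j) (congrFun₂ hC i j)) a b
  map_kronecker ι κ _ _ _ _ C A hCR hCS hA := by
    obtain ⟨C, rfl⟩ := exists_map_subtype_eq hCS
    obtain ⟨A, rfl⟩ := exists_map_subtype_eq hA
    have hkron : C.map S.subtype ⊗ₖ A.map S.subtype = (C ⊗ₖ A).map S.subtype := by
      ext
      simp
    rw [hkron, blockFun_map, blockFun_map]
    ext ⟨⟨i, i'⟩, a⟩ ⟨⟨j, j'⟩, b⟩
    simp [blockHom_apply, h.map_of_mem _ (hCR i j)]
  catalytic ι _ _ A hA := by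
    obtain ⟨B, rfl⟩ := exists_map_subtype_eq hA
    rw [blockFun_map]
    exact blockHom_mul_one_kronecker h.map_mul_proj B

theorem IsCatalyticRep.apply0_toPreEmbedding {φ : S →+* Matrix (Fin k) (Fin k) ℂ}
    {P : Matrix (Fin k) (Fin k) ℂ} (h : IsCatalyticRep R φ P) (hS : ∀ z ∈ S, conj z ∈ S)
    (hR : ∀ z ∈ R, conj z ∈ R) (s : S) : (h.toPreEmbedding hS hR).apply0 s = φ s := by
  change reindex _ _ (blockFun φ Unit ((of fun _ _ => s).map S.subtype)) = φ s
  rw [blockFun_map]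
  rfl

end Representation

/-- An extension `L / K` inside `ℂ` is *Kroneckerian* if complex conjugation commutes with every
embedding of `L` into `ℂ` over `K`. Stability of `L` under conjugation is not part of the
definition: only pairs of conjugate elements of `L` are considered. -/
def IsKroneckerian {K : Subfield ℂ} (L : IntermediateField K ℂ) : Prop :=
  ∀ (τ : L →ₐ[K] ℂ) (z w : L), (w : ℂ) = conj (z : ℂ) → τ w = conj (τ z)

theorem toSubfield_adjoin_simple {E : Type*} [Field E] (K : Subfield E) (α : E) :
    K⟮α⟯.toSubfield = Subfield.closure (insert α (K : Set E)) := by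
  rw [adjoin_toSubfield, Set.union_singleton]
  exact congrArg _ (congrArg _ Subtype.range_coe)

theorem isKroneckerian_adjoin_simple {K : Subfield ℂ} {α : ℂ}
    (h : ∀ σ : Subfield.closure (insert α (K : Set ℂ)) →+* ℂ,
      (∀ x : Subfield.closure (insert α (K : Set ℂ)), (x : ℂ) ∈ K → σ x = x) →
      ∀ (z : ℂ) (hz : z ∈ Subfield.closure (insert α (K : Set ℂ)))
        (hz' : conj z ∈ Subfield.closure (insert α (K : Set ℂ))),
        σ ⟨conj z, hz'⟩ = conj (σ ⟨z, hz⟩)) :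
    IsKroneckerian K⟮α⟯ := by
  rw [← toSubfield_adjoin_simple] at h
  rintro τ ⟨z, hz⟩ ⟨_, hw⟩ rfl
  exact h τ (fun x hx => τ.commutes ⟨x, hx⟩) z hz hw

open scoped Matrix.Norms.L2Operator in
theorem IsKroneckerian.isCatalyticRep {k : ℕ} {K : Subfield ℂ} {L : IntermediateField K ℂ}
    (hL : IsKroneckerian L) (pb : PowerBasis K L) {φ : L →ₐ[K] Matrix (Fin k) (Fin k) ℂ}
    (hnormal : IsStarNormal (φ pb.gen)) (hspec : (pb.gen : ℂ) ∈ spectrum ℂ (φ pb.gen))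
    {S R : Subring ℂ} (hRK : R ≤ K.toSubring) (hSL : S ≤ L.toSubring)
    (hmem : ∀ s : S, φ (Subring.inclusion hSL s) ∈ R.matrix) :
    IsCatalyticRep R ((φ : L →+* _).comp (Subring.inclusion hSL))
      (eigenProjection (φ pb.gen) pb.gen) where
  map_mem := hmem
  map_of_mem _ hs := (φ.commutes ⟨_, hRK hs⟩).trans (Algebra.algebraMap_eq_smul_one _)
  map_conj _ _ hst := algHom_eq_star pb φ hnormal fun τ => hL τ _ _ hst
  isStarProjection := isStarProjection_eigenProjection (finite_spectrum _) _
  ne_zero := eigenProjection_ne_zero hnormal (finite_spectrum _) hspec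
  map_mul_proj _ := algHom_mul_eigenProjection pb φ hnormal (finite_spectrum _) L.val _

section Adjoin

variable {E : Type*} [Field E]

theorem coe_subfield_closure (R : Subring E) :
    (Subfield.closure (R : Set E) : Set E) = {z | ∃ a ∈ R, ∃ b ∈ R, b ≠ 0 ∧ z = a / b} := by
  ext z
  simp only [SetLike.mem_coe, Subfield.mem_closure_iff, Subring.closure_eq, Set.mem_ofPred_eq]
  constructor
  · rintro ⟨a, ha, b, hb, rfl⟩
    rcases eq_or_ne b 0 with rfl | hb0
    · exact ⟨0, R.zero_mem, 1, R.one_mem, one_ne_zero, by simp⟩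
    · exact ⟨a, ha, b, hb, hb0, rfl⟩
  · rintro ⟨a, ha, b, hb, -, rfl⟩
    exact ⟨a, ha, b, hb, rfl⟩

theorem map_minpoly_eq {K : Subfield E} {α : E} {p : E[X]} (hmonic : p.Monic)
    (hcoeff : ∀ m, p.coeff m ∈ K) (hroot : p.eval α = 0)
    (hmin : ∀ q : E[X], (∀ m, q.coeff m ∈ K) → q.Monic → q.eval α = 0 → p.degree ≤ q.degree) :
    (minpoly K α).map (algebraMap K E) = p := by
  have hlifts : p ∈ lifts (algebraMap K E) :=
    (lifts_iff_coeff_lifts p).2 fun m => ⟨⟨_, hcoeff m⟩, rfl⟩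
  obtain ⟨P, rfl, hdeg, hP⟩ := lifts_and_degree_eq_and_monic hlifts hmonic
  rw [eval_map_algebraMap] at hroot
  congr 1
  refine (minpoly.unique K α hP hroot fun q hq hqα => ?_).symm
  rw [hdeg, ← degree_map q (algebraMap K E)]
  refine hmin _ (fun m => ?_) (hq.map _) (by rwa [eval_map_algebraMap])
  rw [coeff_map]
  exact (q.coeff m).2

theorem exists_closure_insert_le_mem_matrix {n : Type*} [Fintype n] [DecidableEq n]
    {K : Subfield E} {L : IntermediateField K E} (φ : L →ₐ[K] Matrix n n E) {R : Subring E}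
    (hRK : R ≤ K.toSubring) {α : E} (hα : α ∈ L) (hφα : φ ⟨α, hα⟩ ∈ R.matrix) :
    ∃ h : Subring.closure (insert α (R : Set E)) ≤ L.toSubring,
      ∀ s, φ (Subring.inclusion h s) ∈ R.matrix := by
  have hle : Subring.closure (insert α (R : Set E)) ≤
      (R.matrix.comap (φ : L →+* Matrix n n E)).map (L.val : L →+* E) := by
    rw [Subring.closure_le]
    rintro z (rfl | hz)
    · exact ⟨⟨z, hα⟩, hφα, rfl⟩
    · refine ⟨algebraMap K L ⟨z, hRK hz⟩, fun i j => ?_, rfl⟩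
      change φ (algebraMap K L ⟨z, hRK hz⟩) i j ∈ R
      rw [φ.commutes, algebraMap_matrix_apply]
      split_ifs
      exacts [hz, R.zero_mem]
  have hL : Subring.closure (insert α (R : Set E)) ≤ L.toSubring := by
    intro z hz
    obtain ⟨x, -, rfl⟩ := hle hz
    exact x.2
  refine ⟨hL, fun s => ?_⟩
  obtain ⟨x, hx, hxs⟩ := hle s.2
  obtain rfl : x = Subring.inclusion hL s := Subtype.ext hxs
  exact hx

end Adjoin

theorem mem_spectrum_iff_of_charpoly_eq_pow {𝕜 n : Type*} [Field 𝕜] [Fintype n] [DecidableEq n]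
    {Λ : Matrix n n 𝕜} {p : 𝕜[X]} {c : ℕ} (hc : c ≠ 0) (h : Λ.charpoly = p ^ c) {z : 𝕜} :
    z ∈ spectrum 𝕜 Λ ↔ p.eval z = 0 := by
  rw [mem_spectrum_iff_isRoot_charpoly, h, IsRoot, eval_pow, pow_eq_zero_iff hc]

theorem conj_mem_closure_insert {R : Subring ℂ} (hR : ∀ z ∈ R, conj z ∈ R) {α : ℂ}
    (hα : conj α ∈ Subring.closure (insert α (R : Set ℂ))) {z : ℂ}
    (hz : z ∈ Subring.closure (insert α (R : Set ℂ))) :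
    conj z ∈ Subring.closure (insert α (R : Set ℂ)) := by
  induction hz using Subring.closure_induction with
  | mem x hx =>
    rcases hx with rfl | hx
    · exact hα
    · exact Subring.subset_closure (Or.inr (hR x hx))
  | zero => simp only [map_zero, zero_mem]
  | one => simp only [_root_.map_one, one_mem]
  | add x y _ _ hx hy => simpa only [_root_.map_add] using add_mem hx hy
  | neg x _ hx => simpa only [map_neg] using neg_mem hx
  | mul x y _ _ hx hy => simpa only [_root_.map_mul] using mul_mem hx hy

open scoped Matrix.Norms.L2Operator in
theorem exists_algHom_adjoin_simple_gen_eq {K : Subfield ℂ} {α : ℂ} (hα : IsIntegral K α)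
    {n : Type*} [Fintype n] [DecidableEq n] {Λ : Matrix n n ℂ} (hΛ : IsStarNormal Λ)
    (hroot : ∀ z ∈ spectrum ℂ Λ, ((minpoly K α).map (algebraMap K ℂ)).eval z = 0) :
    ∃ φ : K⟮α⟯ →ₐ[K] Matrix n n ℂ, φ (adjoin.powerBasis hα).gen = Λ := by
  have h : aeval Λ (minpoly K (adjoin.powerBasis hα).gen) = 0 := by
    rw [adjoin.powerBasis_gen, minpoly_gen, ← aeval_map_algebraMap ℂ]
    exact aeval_eq_zero_of_forall_mem_spectrum hΛ hroot
  exact ⟨(adjoin.powerBasis hα).lift Λ h, (adjoin.powerBasis hα).lift_gen Λ h⟩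

theorem standard_preEmbedding_exists_general (k : ℕ) (R : Subring ℂ)
    (hR : ∀ z ∈ R, (starRingEnd ℂ) z ∈ R)
    (F : Set ℂ) (hF : F = {z : ℂ | ∃ a ∈ R, ∃ b ∈ R, b ≠ 0 ∧ z = a / b})
    (α : ℂ)
    (p : Polynomial ℂ)
    (hp_monic : p.Monic) (hp_coeffF : ∀ m, p.coeff m ∈ F)
    (hp_root : p.eval α = 0)
    (hp_min : ∀ q : Polynomial ℂ, (∀ m, q.coeff m ∈ F) → q ≠ 0 → q.eval α = 0 →
      p.degree ≤ q.degree)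
    (hconjα : (starRingEnd ℂ) α ∈ Subring.closure (insert α (R : Set ℂ)))
    (hKron : ∀ σ : Subfield.closure (insert α F) →+* ℂ,
      (∀ x : Subfield.closure (insert α F), (x : ℂ) ∈ F → σ x = (x : ℂ)) →
      ∀ (z : ℂ) (hz : z ∈ Subfield.closure (insert α F))
        (hz' : (starRingEnd ℂ) z ∈ Subfield.closure (insert α F)),
        σ ⟨(starRingEnd ℂ) z, hz'⟩ = (starRingEnd ℂ) (σ ⟨z, hz⟩))
    (Λ : Matrix (Fin k) (Fin k) ℂ)
    (hΛR : ∀ i j, Λ i j ∈ R)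
    (hΛnormal : Λ * Λᴴ = Λᴴ * Λ)
    (c : ℕ) (hc : 0 < c) (hΛcharpoly : Λ.charpoly = p ^ c) :
    ∃ E : PreEmbedding k (Subring.closure (insert α (R : Set ℂ))) R,
      E.apply0 α = Λ ∧
      ∀ (ι : Type) [Fintype ι] [DecidableEq ι] (n : ℕ) (M : Fin n → Matrix ι ι ℂ),
        (∀ j i i', M j i i' ∈ R) →
        E.toFun ι (∑ j : Fin n, α ^ (j : ℕ) • M j) = ∑ j : Fin n, M j ⊗ₖ (Λ ^ (j : ℕ)) := by
  obtain rfl : F = Subfield.closure (R : Set ℂ) := hF.trans (coe_subfield_closure R).symm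
  have hmin := map_minpoly_eq hp_monic hp_coeffF hp_root fun q hq hqm => hp_min q hq hqm.ne_zero
  have hαint : IsIntegral (Subfield.closure (R : Set ℂ)) α :=
    minpoly.ne_zero_iff.1 fun h => hp_monic.ne_zero (by rw [← hmin, h, Polynomial.map_zero])
  have hnormal : IsStarNormal Λ := ⟨hΛnormal.symm⟩
  have hspec {z : ℂ} : z ∈ spectrum ℂ Λ ↔ p.eval z = 0 :=
    mem_spectrum_iff_of_charpoly_eq_pow hc.ne' hΛcharpoly
  obtain ⟨φ, rfl⟩ :=
    exists_algHom_adjoin_simple_gen_eq hαint hnormal fun z hz => hmin ▸ hspec.1 hz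
  obtain ⟨hSL, hmem⟩ := exists_closure_insert_le_mem_matrix φ Subfield.subset_closure
    (mem_adjoin_simple_self _ α) hΛR
  have hrep := (isKroneckerian_adjoin_simple hKron).isCatalyticRep _ hnormal (hspec.2 hp_root)
    Subfield.subset_closure hSL hmem
  let a : Subring.closure (insert α (R : Set ℂ)) := ⟨α, Subring.subset_closure (.inl rfl)⟩
  refine ⟨hrep.toPreEmbedding (fun _ => conj_mem_closure_insert hR hconjα) hR,
    hrep.apply0_toPreEmbedding _ hR a, fun ι _ _ n M hM => ?_⟩
  have hRS : R ≤ Subring.closure (insert α (R : Set ℂ)) := fun z hz =>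
    Subring.subset_closure (.inr hz)
  exact (blockFun_sum_smul hrep.map_of_mem hRS Finset.univ
    (fun j : Fin n => a ^ (j : ℕ)) M hM).trans <|
      Finset.sum_congr rfl fun j _ => congrArg (M j ⊗ₖ ·) (_root_.map_pow _ a j)

/-- Proposition `lamblin`, part 2 / standard catalytic embeddings. Given a
normal pseudo-companion matrix `Λ` over `R` for the minimal polynomial `p` of `α` over
`F = Frac(R)` (whose coefficients lie in `R`), and assuming `F(α)` is Kroneckerian, there is a
pre-embedding `Φ` of dimension `k` from `R[α]` to `R` with `Φ₀(α) = Λ` and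
`Φ(Σ_j α^j • A_j) = Σ_j A_j ⊗ Λ^j`. -/
theorem standard_preEmbedding_exists (k : ℕ) (R : Subring ℂ)
    (hR : ∀ z ∈ R, (starRingEnd ℂ) z ∈ R)
    (F : Set ℂ) (hF : F = {z : ℂ | ∃ a ∈ R, ∃ b ∈ R, b ≠ 0 ∧ z = a / b})
    (α : ℂ)
    (p : Polynomial ℂ) (d : ℕ)
    (hp_monic : p.Monic) (hp_coeffF : ∀ m, p.coeff m ∈ F) (hp_coeffR : ∀ m, p.coeff m ∈ R)
    (hp_root : p.eval α = 0) (hp_deg : p.natDegree = d)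
    (hp_min : ∀ q : Polynomial ℂ, (∀ m, q.coeff m ∈ F) → q ≠ 0 → q.eval α = 0 →
      p.degree ≤ q.degree)
    (hconjα : (starRingEnd ℂ) α ∈ Subring.closure (insert α (R : Set ℂ)))
    (hKron : ∀ σ : Subfield.closure (insert α F) →+* ℂ,
      (∀ x : Subfield.closure (insert α F), (x : ℂ) ∈ F → σ x = (x : ℂ)) →
      ∀ (z : ℂ) (hz : z ∈ Subfield.closure (insert α F))
        (hz' : (starRingEnd ℂ) z ∈ Subfield.closure (insert α F)),
        σ ⟨(starRingEnd ℂ) z, hz'⟩ = (starRingEnd ℂ) (σ ⟨z, hz⟩))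
    (Λ : Matrix (Fin k) (Fin k) ℂ)
    (hΛR : ∀ i j, Λ i j ∈ R)
    (hΛnormal : Λ * Λᴴ = Λᴴ * Λ)
    (c : ℕ) (hc : 0 < c) (hΛcharpoly : Λ.charpoly = p ^ c) :
    ∃ E : PreEmbedding k (Subring.closure (insert α (R : Set ℂ))) R,
      E.apply0 α = Λ ∧
      ∀ (ι : Type) [Fintype ι] [DecidableEq ι] (A : Matrix ι ι ℂ),
        (∀ i j, A i j ∈ Subring.closure (insert α (R : Set ℂ))) →
        ∀ M : Fin d → Matrix ι ι ℂ,
          (∀ j i i', M j i i' ∈ R) →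
          A = ∑ j : Fin d, α ^ (j : ℕ) • M j →
          E.toFun ι A = ∑ j : Fin d, Matrix.kroneckerMap (· * ·) (M j) (Λ ^ (j : ℕ)) := by
  obtain ⟨E, hE, hsum⟩ := standard_preEmbedding_exists_general k R hR F hF α p hp_monic hp_coeffF
    hp_root hp_min hconjα hKron Λ hΛR hΛnormal c hc hΛcharpoly
  exact ⟨E, hE, fun ι _ _ A _ M hM hA => hA ▸ hsum ι d M hM⟩
end
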